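/- Let s ≥ 1, let 0 ≤ q ≤ s, and set n = T_s + q. If λ is a partition of n with deg(λ) = Δ_n, then A(λ) + B(λ) = ρ(q) and T_{A(λ)} + T_{B(λ)} ≤ q. -/

import Mathlib

/-!
Let `r`, `A`, `B` be the support, gap bonus and multiplicity bonus of a partition of `n`.
Everything rests on the inequality `T r + T A + T B ≤ n` (`T_supp_add_le`). Each gap below a part
size skips an integer, so a set of `r` positive integers with `A` gaps has maximum at least
`r + A`; building the set up from its smallest element gives sum at least `T r + T A`
(`gap_induction`). The second copies of the repeated sizes contribute at least `T B` more.

Conversely, if `T a + T b ≤ q ≤ s` with, by symmetry, `a ≤ b`, then `a + b ≤ s` and `a < s`, and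
the sizes `1, …, s-a, s-a+2, s-a+4, …, s+a` together with second copies of `1, …, b` and with
additional ones form a partition of `T s + q` of degree at least `s(s-1) + a + b`
(`exists_partition`). Hence the maximal degree is at least `s(s-1) + ρ(q)`.

For a maximizer, `T r ≤ T s + q < T (s+1)` forces `r ≤ s`. If `r = s`, the inequality reads
`T A + T B ≤ q`, so `A + B ≤ ρ(q)`, and maximality gives equality. If `r < s`, then `A, B ≤ r`
bounds the degree by `r(r+1)`, which reaches `s(s-1)` only if `r = s-1`, `A = B = r` and `q = 0`;
as `r ≥ 1`, the inequality then leaves only `r = 1`, `n = 3`. There a single size `L ≥ 2` would be repeated,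
which needs `n ≥ 4`.
-/

namespace PartitionDegree

/-- The `m`-th triangular number. -/
def T (m : ℕ) : ℕ := m * (m + 1) / 2

/-- The number of distinct part sizes of a partition. -/
def supp {n : ℕ} (lam : n.Partition) : ℕ := lam.parts.toFinset.card

/-- The gap-bonus count: distinct part sizes `L ≥ 2` such that `L - 1` is not a part size. -/
def gapBonus {n : ℕ} (lam : n.Partition) : ℕ :=
  (lam.parts.toFinset.filter (fun L => 2 ≤ L ∧ (L - 1) ∉ lam.parts)).card

/-- The multiplicity-bonus count: distinct part sizes occurring with multiplicity at least 2. -/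
def multBonus {n : ℕ} (lam : n.Partition) : ℕ :=
  (lam.parts.toFinset.filter (fun L => 2 ≤ lam.parts.count L)).card

/-- The degree of a partition in the partition graph. -/
def deg {n : ℕ} (lam : n.Partition) : ℕ :=
  supp lam * (supp lam - 1) + gapBonus lam + multBonus lam

/-- The maximal degree over all partitions of `n`. -/
def maxDeg (n : ℕ) : ℕ := Finset.univ.sup (fun lam : n.Partition => deg lam)

/-- `ρ(q)`: the maximum of `a + b` over pairs with `T a + T b ≤ q`. -/
noncomputable def rho (q : ℕ) : ℕ := sSup {c : ℕ | ∃ a b : ℕ, c = a + b ∧ T a + T b ≤ q}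

/-- `mu` is the conjugate of `lam`: for each `k ≥ 1`, the multiplicity of `k` in `mu`
equals (number of parts of `lam` that are `≥ k`) minus (number of parts `≥ k + 1`). -/
def IsConjugate {n : ℕ} (lam mu : n.Partition) : Prop :=
  ∀ k : ℕ, 1 ≤ k →
    mu.parts.count k =
      Multiset.countP (fun p => k ≤ p) lam.parts -
        Multiset.countP (fun p => k + 1 ≤ p) lam.parts

/-! ### Triangular numbers -/

lemma T_succ (m : ℕ) : T (m + 1) = T m + (m + 1) := by
  unfold T
  have : (m + 1) * (m + 1 + 1) = m * (m + 1) + (m + 1) * 2 := by ring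
  rw [this, Nat.add_mul_div_right _ _ (by norm_num)]

lemma T_zero : T 0 = 0 := rfl

lemma two_mul_T (m : ℕ) : 2 * T m = m * (m + 1) := by
  induction m with
  | zero => rfl
  | succ k ih => rw [T_succ]; linarith

lemma le_T (m : ℕ) : m ≤ T m := by
  cases m with
  | zero => exact Nat.zero_le _
  | succ k => rw [T_succ]; omega

lemma T_mono {a b : ℕ} (h : a ≤ b) : T a ≤ T b := by
  have h1 := two_mul_T a
  have h2 := two_mul_T b
  nlinarith

/-! ### Lower bound on the sum of a partition -/

/-- The elements `L ≥ 2` of `S` whose predecessor is not in `S`. -/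
def gaps (S : Finset ℕ) : Finset ℕ := S.filter (fun L => 2 ≤ L ∧ (L - 1) ∉ S)

lemma gaps_insert {S : Finset ℕ} {m : ℕ} (hm : ∀ x ∈ S, x < m) :
    gaps (insert m S) =
      if 2 ≤ m ∧ m - 1 ∉ S then insert m (gaps S) else gaps S := by
  ext x
  have key : ∀ y ∈ S, y - 1 ≠ m := fun y hy => by have := hm y hy; omega
  split_ifs with h <;>
    simp only [gaps, Finset.mem_insert, Finset.mem_filter]
  · constructor
    · rintro ⟨rfl | hx, h2, h3⟩
      · exact Or.inl rfl
      · exact Or.inr ⟨hx, h2, fun h => h3 (Or.inr h)⟩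
    · rintro (rfl | ⟨hx, h2, h3⟩)
      · refine ⟨Or.inl rfl, h.1, ?_⟩
        rintro (h4 | h4)
        · omega
        · exact h.2 h4
      · refine ⟨Or.inr hx, h2, ?_⟩
        rintro (h4 | h4)
        · exact key x hx h4
        · exact h3 h4
  · constructor
    · rintro ⟨rfl | hx, h2, h3⟩
      · exact absurd ⟨h2, fun h4 => h3 (Or.inr h4)⟩ h
      · exact ⟨hx, h2, fun h => h3 (Or.inr h)⟩
    · rintro ⟨hx, h2, h3⟩
      refine ⟨Or.inr hx, h2, ?_⟩
      rintro (h4 | h4)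
      · exact key x hx h4
      · exact h3 h4

/-- Every upper bound of a set of positive integers is at least its size plus its number of gaps,
and its sum is at least the sum of the corresponding triangular numbers. The first part drives the
induction for the second, the new maximum being the increment of the sum. -/
lemma gap_induction (S : Finset ℕ) (hpos : ∀ x ∈ S, 0 < x) :
    (∀ M, (∀ x ∈ S, x ≤ M) → S.card + (gaps S).card ≤ M) ∧
      T S.card + T (gaps S).card ≤ ∑ x ∈ S, x := by
  induction S using Finset.induction_on_max with
  | empty => simp [gaps, T]
  | insert m S hm ih =>
    obtain ⟨ih1, ih2⟩ := ih (fun x hx => hpos x (Finset.mem_insert_of_mem hx))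
    have hmS : m ∉ S := fun h => lt_irrefl _ (hm m h)
    have hm0 : 0 < m := hpos m (Finset.mem_insert_self _ _)
    have hcard : (insert m S).card = S.card + 1 := Finset.card_insert_of_notMem hmS
    rw [Finset.sum_insert hmS, gaps_insert hm, hcard, T_succ]
    split_ifs with h
    · have hmg : m ∉ gaps S := fun h => hmS (Finset.mem_filter.1 h).1
      rw [Finset.card_insert_of_notMem hmg, T_succ]
      have := ih1 (m - 2) (fun x hx => by
        have h1 := hm x hx
        have h2 : x ≠ m - 1 := fun h3 => h.2 (h3 ▸ hx)
        omega)
      refine ⟨fun M hM => ?_, by omega⟩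
      have := hM m (Finset.mem_insert_self _ _)
      omega
    · have := ih1 (m - 1) (fun x hx => by have h1 := hm x hx; omega)
      refine ⟨fun M hM => ?_, by omega⟩
      have := hM m (Finset.mem_insert_self _ _)
      omega

lemma gapBonus_eq {n : ℕ} (lam : n.Partition) :
    gapBonus lam = (gaps lam.parts.toFinset).card := by
  simp [gapBonus, gaps]

lemma gapBonus_le {n : ℕ} (lam : n.Partition) : gapBonus lam ≤ supp lam :=
  Finset.card_filter_le _ _

lemma multBonus_le {n : ℕ} (lam : n.Partition) : multBonus lam ≤ supp lam :=
  Finset.card_filter_le _ _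

lemma sum_count {n : ℕ} (lam : n.Partition) :
    ∑ x ∈ lam.parts.toFinset, lam.parts.count x * x = n := by
  have h := Finset.sum_multiset_count lam.parts
  rw [lam.parts_sum] at h
  simpa using h.symm

lemma supp_pos {n : ℕ} (lam : n.Partition) (hn : 0 < n) : 0 < supp lam := by
  refine Finset.card_pos.2 (Finset.nonempty_iff_ne_empty.2 fun h => ?_)
  have := sum_count lam
  rw [h, Finset.sum_empty] at this
  omega

lemma T_supp_add_le {n : ℕ} (lam : n.Partition) :
    T (supp lam) + T (gapBonus lam) + T (multBonus lam) ≤ n := by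
  have hpos : ∀ x ∈ lam.parts.toFinset, 0 < x :=
    fun x hx => lam.parts_pos (Multiset.mem_toFinset.1 hx)
  have h1 := (gap_induction _ hpos).2
  have h2 := (gap_induction (lam.parts.toFinset.filter (fun L => 2 ≤ lam.parts.count L))
    (fun x hx => hpos x (Finset.mem_filter.1 hx).1)).2
  have h3 : ∑ x ∈ lam.parts.toFinset, x +
      ∑ x ∈ lam.parts.toFinset.filter (fun L => 2 ≤ lam.parts.count L), x ≤ n := by
    conv_rhs => rw [← sum_count lam]
    rw [Finset.sum_filter, ← Finset.sum_add_distrib]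
    refine Finset.sum_le_sum fun x hx => ?_
    have : 1 ≤ lam.parts.count x := Multiset.one_le_count_iff_mem.2 (Multiset.mem_toFinset.1 hx)
    split_ifs <;> nlinarith
  rw [gapBonus_eq]
  unfold supp multBonus
  omega

/-- If every part size carries both bonuses, every size and every multiplicity is at least `2`. -/
lemma four_mul_supp_le {n : ℕ} (lam : n.Partition) (hA : gapBonus lam = supp lam)
    (hB : multBonus lam = supp lam) : 4 * supp lam ≤ n := by
  have h1 := Finset.card_filter_eq_iff.1 hA
  have h2 := Finset.card_filter_eq_iff.1 hB
  conv_rhs => rw [← sum_count lam]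
  have := Finset.card_nsmul_le_sum lam.parts.toFinset (fun x => lam.parts.count x * x) 4
    (fun x hx => by
      have h3 := (h1 x hx).1
      have h4 := h2 x hx
      show 4 ≤ lam.parts.count x * x
      nlinarith)
  unfold supp
  rw [smul_eq_mul] at this
  omega

/-! ### A partition of large degree -/

/-- The part sizes `1, …, c, c + 2, c + 4, …, c + 2a`. -/
def gappedSet (c a : ℕ) : Finset ℕ :=
  Finset.Icc 1 c ∪ (Finset.range a).image (fun j => c + 2 * (j + 1))

lemma mem_gappedSet {c a x : ℕ} :
    x ∈ gappedSet c a ↔ (1 ≤ x ∧ x ≤ c) ∨ ∃ j < a, c + 2 * (j + 1) = x := by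
  simp [gappedSet]

lemma gappedSet_succ (c a : ℕ) :
    gappedSet c (a + 1) = insert (c + 2 * (a + 1)) (gappedSet c a) := by
  simp [gappedSet, Finset.range_add_one]

lemma notMem_gappedSet (c a : ℕ) : c + 2 * (a + 1) ∉ gappedSet c a := by
  rw [mem_gappedSet]
  rintro (h | ⟨j, hj, h⟩) <;> omega

lemma card_gappedSet (c a : ℕ) : (gappedSet c a).card = c + a := by
  induction a with
  | zero => simp [gappedSet]
  | succ a ih =>
    rw [gappedSet_succ, Finset.card_insert_of_notMem (notMem_gappedSet c a), ih]; omega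

lemma sum_Icc_eq_T (c : ℕ) : ∑ x ∈ Finset.Icc 1 c, x = T c := by
  induction c with
  | zero => rfl
  | succ c ih => rw [Finset.sum_Icc_succ_top (by omega), ih, T_succ]

lemma sum_gappedSet (c a : ℕ) : ∑ x ∈ gappedSet c a, x = T (c + a) + T a := by
  induction a with
  | zero => simp [gappedSet, sum_Icc_eq_T, T_zero]
  | succ a ih =>
    rw [gappedSet_succ, Finset.sum_insert (notMem_gappedSet c a), ih, ← add_assoc c a 1, T_succ, T_succ]
    omega

/-- The witness has the sizes `gappedSet c a`, second copies of `1, …, b`, and `l` more ones; as `1`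
is already a size, the latter destroy no bonus. -/
lemma exists_partition (c a b l n : ℕ) (hc : 1 ≤ c) (hb : b ≤ c)
    (hn : T (c + a) + T a + T b + l = n) :
    ∃ lam : n.Partition, (c + a) * (c + a - 1) + a + b ≤ deg lam := by
  set P : Multiset ℕ :=
    (gappedSet c a).val + (Finset.Icc 1 b).val + Multiset.replicate l 1 with hP
  have hsum : P.sum = n := by
    have h1 := sum_gappedSet c a
    have h2 := sum_Icc_eq_T b
    rw [Finset.sum_eq_multiset_sum, Multiset.map_id'] at h1 h2
    rw [hP, Multiset.sum_add, Multiset.sum_add, h1, h2, Multiset.sum_replicate, smul_eq_mul]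
    omega
  have hmem : ∀ x, x ∈ P ↔ x ∈ gappedSet c a := by
    intro x
    simp only [hP, Multiset.mem_add, Finset.mem_val, Finset.mem_Icc, Multiset.mem_replicate]
    constructor
    · rintro ((h | h) | h)
      · exact h
      · exact mem_gappedSet.2 (Or.inl (by omega))
      · exact mem_gappedSet.2 (Or.inl (by omega))
    · exact fun h => Or.inl (Or.inl h)
  have hset : P.toFinset = gappedSet c a := by
    ext x; rw [Multiset.mem_toFinset, hmem]
  have hpos : ∀ {x}, x ∈ P → 0 < x := by
    intro x hx
    rcases mem_gappedSet.1 ((hmem x).1 hx) with h | ⟨j, _, h⟩ <;> omega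
  refine ⟨⟨P, hpos, hsum⟩, ?_⟩
  have hsupp : supp (⟨P, hpos, hsum⟩ : n.Partition) = c + a := by
    simp only [supp, hset, card_gappedSet]
  have hA : a ≤ gapBonus (⟨P, hpos, hsum⟩ : n.Partition) := by
    have hinj : Function.Injective (fun j : ℕ => c + 2 * (j + 1)) := fun i j h => by
      simp only at h; omega
    calc a = ((Finset.range a).image (fun j => c + 2 * (j + 1))).card := by
            rw [Finset.card_image_of_injective _ hinj, Finset.card_range]
      _ ≤ _ := Finset.card_le_card fun x hx => by
            simp only [Finset.mem_image, Finset.mem_range] at hx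
            obtain ⟨j, hj, rfl⟩ := hx
            simp only [Finset.mem_filter, hset, hmem, mem_gappedSet]
            refine ⟨Or.inr ⟨j, hj, rfl⟩, by omega, ?_⟩
            rintro (h | ⟨i, hi, h⟩) <;> omega
  have hB : b ≤ multBonus (⟨P, hpos, hsum⟩ : n.Partition) := by
    calc b = (Finset.Icc 1 b).card := by simp
      _ ≤ _ := Finset.card_le_card fun x hx => by
            have hx' := Finset.mem_Icc.1 hx
            have hxS : x ∈ gappedSet c a := mem_gappedSet.2 (Or.inl (by omega))
            simp only [Finset.mem_filter, hset]
            refine ⟨hxS, ?_⟩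
            have h1 : 1 ≤ Multiset.count x (gappedSet c a).val :=
              Multiset.one_le_count_iff_mem.2 hxS
            have h2 : 1 ≤ Multiset.count x (Finset.Icc 1 b).val :=
              Multiset.one_le_count_iff_mem.2 hx
            rw [hP, Multiset.count_add, Multiset.count_add]
            omega
  unfold deg
  rw [hsupp]
  omega

/-! ### The maximal degree and `ρ` -/

lemma bddAbove_rho (q : ℕ) : BddAbove {c : ℕ | ∃ a b : ℕ, c = a + b ∧ T a + T b ≤ q} := by
  refine ⟨q, ?_⟩
  rintro c ⟨a, b, rfl, h⟩
  have := le_T a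
  have := le_T b
  omega

lemma le_rho {q a b : ℕ} (h : T a + T b ≤ q) : a + b ≤ rho q :=
  le_csSup (bddAbove_rho q) ⟨a, b, rfl, h⟩

lemma exists_rho (q : ℕ) : ∃ a b : ℕ, a ≤ b ∧ rho q = a + b ∧ T a + T b ≤ q := by
  obtain ⟨a, b, h1, h2⟩ : rho q ∈ {c : ℕ | ∃ a b : ℕ, c = a + b ∧ T a + T b ≤ q} :=
    Nat.sSup_mem ⟨0, 0, 0, rfl, by simp [T_zero]⟩ (bddAbove_rho q)
  rcases le_total a b with h | h
  · exact ⟨a, b, h, h1, h2⟩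
  · exact ⟨b, a, h, by omega, by omega⟩

lemma le_maxDeg (s q : ℕ) (hs : 1 ≤ s) (hqs : q ≤ s) :
    s * (s - 1) + rho q ≤ maxDeg (T s + q) := by
  obtain ⟨a, b, hab, hr, hT⟩ := exists_rho q
  have ha := le_T a
  have hb := le_T b
  have hsa : s - a + a = s := by omega
  -- `1 ≤ s - a`, since `a = s` together with `a ≤ b` and `a + b ≤ s` would force `s = 0`.
  obtain ⟨lam, hlam⟩ := exists_partition (s - a) a b (q - T a - T b) (T s + q)
    (by omega) (by omega) (by rw [hsa]; omega)
  rw [hsa] at hlam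
  have : deg lam ≤ maxDeg (T s + q) :=
    Finset.le_sup (f := fun lam : (T s + q).Partition => deg lam) (Finset.mem_univ lam)
  omega

/-- profile constraint for maximizers: if `λ ⊢ T s + q` is
degree-maximizing then `A(λ) + B(λ) = ρ(q)` and `T_{A(λ)} + T_{B(λ)} ≤ q`. -/
theorem profile_constraint (s q : ℕ) (hs : 1 ≤ s) (hqs : q ≤ s)
    (lam : (T s + q).Partition) (hmax : deg lam = maxDeg (T s + q)) :
    gapBonus lam + multBonus lam = rho q ∧
      T (gapBonus lam) + T (multBonus lam) ≤ q := by
  have hlow := le_maxDeg s q hs hqs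
  have hbound := T_supp_add_le lam
  have hA := gapBonus_le lam
  have hB := multBonus_le lam
  have hsupp := supp_pos lam (by have := le_T s; omega)
  have hfour := four_mul_supp_le lam
  rw [← hmax] at hlow
  unfold deg at hlow
  generalize supp lam = r at *
  generalize gapBonus lam = A at *
  generalize multBonus lam = B at *
  have hrs : r ≤ s := by
    by_contra! h
    have := T_mono (show s + 1 ≤ r from h)
    rw [T_succ] at this
    omega
  rcases hrs.eq_or_lt with rfl | hlt
  · have hT : T A + T B ≤ q := by omega
    have := le_rho hT
    exact ⟨by omega, hT⟩
  · exfalso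
    obtain ⟨k, rfl⟩ := Nat.exists_eq_add_of_lt hlt
    have hr : r * (r - 1) + 2 * r = r * (r + 1) := by
      cases r with
      | zero => rfl
      | succ r => rw [Nat.add_sub_cancel]; ring
    have hk : (r + k + 1) * (r + k + 1 - 1) = r * (r + 1) + k * (2 * r + 1 + k) := by
      rw [Nat.add_sub_cancel]; ring
    rw [hk] at hlow
    -- Comparing `r(r-1) + A + B ≤ r(r+1)` with the lower bound leaves only the extremal case.
    have hk0 : k = 0 := by
      by_contra h
      have : 0 < k * (2 * r + 1 + k) := by positivity
      omega
    subst hk0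
    have hAr : A = r := by omega
    have hBr : B = r := by omega
    have hrho : rho q = 0 := by omega
    have hq : q = 0 := by
      by_contra h
      have := le_rho (q := q) (a := 1) (b := 0) (by simp [T]; omega)
      omega
    subst hAr hBr hq
    have h4 := hfour rfl rfl
    simp only [Nat.add_zero] at *
    rw [T_succ] at hbound h4
    have h2 := two_mul_T B
    -- `2 T r ≤ r + 1` leaves `r = 1`, and `4 r ≤ T r + r + 1` excludes it.
    have hB1 : B ≤ 1 := by nlinarith
    obtain rfl : B = 1 := by omega
    rw [T_succ, T_zero] at h4
    omega

end PartitionDegree
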